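/- Let Σ_A(ℕ) be a topologically mixing, finitely primitive (BIP) countable Markov shift and f : Σ_A(ℕ) → ℝ satisfy the Walters condition with Var_1 f < ∞ and P(f) < ∞. The Mañé potential S_f satisfies: (1) S_f(x,y) ≤ V(y) − V(x) for any bounded calibrated sub-action V and all x, y ∈ Σ_A(ℕ); (2) S_f(x,x) ≤ 0 for every x ∈ Σ_A(ℕ); (3) S_f(x,y) + S_f(y,z) ≤ S_f(x,z) for all x, y, z ∈ Σ_A(ℕ). -/

import Mathlib

open Filter Topology MeasureTheory
open scoped ENNReal

/-- The countable Markov shift over alphabet ℕ determined by the 0-1 matrix `A`. -/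
def MarkovShift (A : ℕ → ℕ → Bool) : Type :=
  {x : ℕ → ℕ // ∀ i, A (x i) (x (i + 1)) = true}

namespace MarkovShift

variable {A : ℕ → ℕ → Bool}

instance : TopologicalSpace (MarkovShift A) :=
  instTopologicalSpaceSubtype

instance : MeasurableSpace (MarkovShift A) := borel _

instance : BorelSpace (MarkovShift A) := ⟨rfl⟩

/-- The shift map. -/
def shift (x : MarkovShift A) : MarkovShift A :=
  ⟨fun n => x.1 (n + 1), fun i => x.2 (i + 1)⟩

/-- The cylinder set determined by a finite word. -/
def cylinder (w : List ℕ) : Set (MarkovShift A) :=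
  {x | ∀ i : Fin w.length, x.1 i = w.get i}

/-- The cylinder set determined by the first `m` coordinates of `x`. -/
def cylOf (x : MarkovShift A) (m : ℕ) : Set (MarkovShift A) :=
  {y | ∀ i < m, y.1 i = x.1 i}

/-- A symbol is admissible when its cylinder is nonempty. -/
def Admissible (A : ℕ → ℕ → Bool) (a : ℕ) : Prop :=
  ∃ x : MarkovShift A, x.1 0 = a

/-- Topologically mixing. -/
def TopologicallyMixing (A : ℕ → ℕ → Bool) : Prop :=
  ∀ a b : ℕ, Admissible A a → Admissible A b →
    ∃ N : ℕ, ∀ n ≥ N, ∃ x : MarkovShift A, x.1 0 = a ∧ (shift^[n] x).1 0 = b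

/-- Finitely primitive (BIP). -/
def FinitelyPrimitive (A : ℕ → ℕ → Bool) : Prop :=
  ∃ (K₀ : ℕ) (F : Finset ℕ), ∀ a b : ℕ, Admissible A a → Admissible A b →
    ∃ w : List ℕ, w.length = K₀ ∧ (∀ c ∈ w, c ∈ F) ∧
      List.Chain' (fun u v => A u v = true) (a :: (w ++ [b]))

/-- First coordinate where two distinct points disagree. -/
noncomputable def firstDiff (x y : MarkovShift A) (h : x ≠ y) : ℕ :=
  Nat.find (Function.ne_iff.mp (fun hxy : x.1 = y.1 => h (Subtype.ext hxy)))

open Classical in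
/-- The metric `d(x,y) = r^{t(x,y)}`. -/
noncomputable def dist' (r : ℝ) (x y : MarkovShift A) : ℝ :=
  if h : x = y then 0 else r ^ firstDiff x y h

/-- Birkhoff sum `S_n f`. -/
def birkhoff (f : MarkovShift A → ℝ) (n : ℕ) (x : MarkovShift A) : ℝ :=
  ∑ j ∈ Finset.range n, f (shift^[j] x)

/-- The set of values `|S_n f x - S_n f y|` over pairs agreeing on the first `m` coordinates. -/
def varSet (f : MarkovShift A → ℝ) (n m : ℕ) : Set ℝ :=
  {c | ∃ x y : MarkovShift A, (∀ i < m, x.1 i = y.1 i) ∧ c = |birkhoff f n x - birkhoff f n y|}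

/-- `Var_m (S_n f)`. -/
noncomputable def varBirk (f : MarkovShift A → ℝ) (n m : ℕ) : ℝ := sSup (varSet f n m)

/-- `Var_1 f < ∞`. -/
def Var1Finite (f : MarkovShift A → ℝ) : Prop := BddAbove (varSet f 1 1)

/-- The set whose supremum is `sup_{n ≥ 1} Var_{n+k}(S_n f)`. -/
def waltersSet (f : MarkovShift A → ℝ) (k : ℕ) : Set ℝ :=
  {c | ∃ n, 1 ≤ n ∧ c ∈ varSet f n (n + k)}

/-- `M_k = sup_{n ≥ 1} Var_{n+k}(S_n f)`. -/
noncomputable def waltersSup (f : MarkovShift A → ℝ) (k : ℕ) : ℝ := sSup (waltersSet f k)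

/-- The Walters condition. -/
def SatisfiesWalters (f : MarkovShift A → ℝ) : Prop :=
  (∀ k, 1 ≤ k → BddAbove (waltersSet f k)) ∧
    Tendsto (fun k => waltersSup f k) atTop (𝓝 0)

/-- The partition function `Z_n(f,a) = Σ_{σ^n x = x, x₀ = a} e^{S_n f (x)}`. -/
noncomputable def partitionSum (f : MarkovShift A → ℝ) (n : ℕ) (a : ℕ) : ℝ :=
  ∑' x : {x : MarkovShift A // shift^[n] x = x ∧ x.1 0 = a}, Real.exp (birkhoff f n x.1)

/-- `f` has (finite) Gurevich pressure `p`. -/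
def HasGurevichPressure (f : MarkovShift A → ℝ) (p : ℝ) : Prop :=
  ∀ a : ℕ, Admissible A a →
    (∀ n, 1 ≤ n → Summable fun x : {x : MarkovShift A // shift^[n] x = x ∧ x.1 0 = a} =>
        Real.exp (birkhoff f n x.1)) ∧
    Tendsto (fun n : ℕ => (1 / (n : ℝ)) * Real.log (partitionSum f n a)) atTop (𝓝 p)

/-- σ-invariant Borel probability measure. -/
def IsInvariantProb (μ : Measure (MarkovShift A)) : Prop :=
  IsProbabilityMeasure μ ∧ μ.map shift = μ

/-- `m(f)`, the maximal ergodic average. -/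
noncomputable def mf (f : MarkovShift A → ℝ) : ℝ :=
  sSup {c | ∃ μ : Measure (MarkovShift A),
    IsInvariantProb μ ∧ Integrable f μ ∧ ∫ x, f x ∂μ = c}

/-- A maximizing measure for `f`. -/
def IsMaximizing (f : MarkovShift A → ℝ) (μ : Measure (MarkovShift A)) : Prop :=
  IsInvariantProb μ ∧ Integrable f μ ∧ ∫ x, f x ∂μ = mf f

/-- Bounded real valued function. -/
def BoundedFun (g : MarkovShift A → ℝ) : Prop := ∃ C, ∀ x, |g x| ≤ C

/-- A bounded calibrated sub-action for `f`. -/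
def IsCalibratedSubaction (f V : MarkovShift A → ℝ) : Prop :=
  Continuous V ∧ BoundedFun V ∧
    (∀ x, f x + V x - V (shift x) - mf f ≤ 0) ∧
    (∀ y, ∃ x, shift x = y ∧ f x + V x - V (shift x) - mf f = 0)

/-- The Ruelle transfer operator `(L_g u)(x) = Σ_{σ y = x} e^{g(y)} u(y)`. -/
noncomputable def ruelle (g u : MarkovShift A → ℝ) (x : MarkovShift A) : ℝ :=
  ∑' y : {y : MarkovShift A // shift y = x}, Real.exp (g y.1) * u y.1

/-- Ruelle-Perron-Frobenius data for the potential `f` with pressure `p`: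
eigenfunction `h`, eigenmeasure `ν`. -/
def IsRPF (f : MarkovShift A → ℝ) (p : ℝ) (h : MarkovShift A → ℝ)
    (ν : Measure (MarkovShift A)) : Prop :=
  Continuous h ∧ (∀ x, 0 < h x) ∧
    (∀ x, ruelle f h x = Real.exp p * h x) ∧
    IsProbabilityMeasure ν ∧
    (∀ g : MarkovShift A → ℝ, Continuous g → BoundedFun g →
      ∫ x, ruelle f g x ∂ν = Real.exp p * ∫ x, g x ∂ν) ∧
    ∫ x, h x ∂ν = 1

/-- The Gibbs measure `dμ = h dν`. -/
noncomputable def gibbs (h : MarkovShift A → ℝ) (ν : Measure (MarkovShift A)) :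
    Measure (MarkovShift A) :=
  ν.withDensity fun x => ENNReal.ofReal (h x)

/-- The Mañé potential `S_f(x,y)` (with respect to the metric of parameter `r`). -/
noncomputable def manePot (r : ℝ) (f : MarkovShift A → ℝ) (x y : MarkovShift A) : EReal :=
  ⨅ ε : {ε : ℝ // 0 < ε}, ⨆ n : {n : ℕ // 1 ≤ n},
    ⨆ _z : {z : MarkovShift A // dist' r x z < ε.1 ∧ shift^[n.1] z = y},
      ((birkhoff (fun w => f w - mf f) n.1 _z.1 : ℝ) : EReal)

/-- The (topological) support of a measure. -/
def msupport (μ : Measure (MarkovShift A)) : Set (MarkovShift A) :=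
  {x | ∀ U : Set (MarkovShift A), IsOpen U → x ∈ U → 0 < μ U}

end MarkovShift

namespace MarkovShift

theorem shift_iter_apply {A : ℕ → ℕ → Bool} (x : MarkovShift A) (n i : ℕ) :
    (shift^[n] x).1 i = x.1 (n + i) := by
  induction n generalizing x with
  | zero => simp
  | succ k ih =>
    rw [Function.iterate_succ_apply, ih]
    show x.1 (k + i + 1) = _
    rw [show k + 1 + i = k + i + 1 by omega]

theorem ext_iff' {A : ℕ → ℕ → Bool} {x y : MarkovShift A} (h : ∀ i, x.1 i = y.1 i) : x = y :=
  Subtype.ext (funext h)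

theorem agree_of_dist {A : ℕ → ℕ → Bool} {r : ℝ} (hr0 : 0 < r) (hr1 : r < 1)
    {x z : MarkovShift A} {k : ℕ} (h : dist' r x z < r ^ k) : ∀ i < k, z.1 i = x.1 i := by
  intro i hi
  unfold dist' at h
  split_ifs at h with hxz
  · rw [hxz]
  · have h2 : k < firstDiff x z hxz := (pow_lt_pow_iff_right_of_lt_one₀ hr0 hr1).1 h
    have h3 := Nat.find_min (Function.ne_iff.mp
      (fun hxy : x.1 = z.1 => hxz (Subtype.ext hxy))) (m := i) (lt_trans hi h2)
    exact (not_not.1 h3).symm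

theorem dist_of_agree {A : ℕ → ℕ → Bool} {r : ℝ} (hr0 : 0 < r) (hr1 : r < 1)
    {x z : MarkovShift A} {k : ℕ} (h : ∀ i < k, z.1 i = x.1 i) : dist' r x z ≤ r ^ k := by
  unfold dist'
  split_ifs with hxz
  · positivity
  · have h3 := Nat.find_spec (Function.ne_iff.mp
      (fun hxy : x.1 = z.1 => hxz (Subtype.ext hxy)))
    apply (pow_le_pow_iff_right_of_lt_one₀ hr0 hr1).2
    by_contra hlt
    exact h3 (h _ (not_le.1 hlt)).symm

theorem exists_of_lt_mane {A : ℕ → ℕ → Bool} {r : ℝ} (hr0 : 0 < r) (hr1 : r < 1)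
    {f : MarkovShift A → ℝ} {x y : MarkovShift A} {c : ℝ} (h : (c : EReal) < manePot r f x y)
    (k : ℕ) : ∃ n, 1 ≤ n ∧ ∃ z : MarkovShift A, (∀ i < k, z.1 i = x.1 i) ∧ shift^[n] z = y ∧
      c < birkhoff (fun w => f w - mf f) n z := by
  have h1 := lt_of_lt_of_le h (iInf_le _ (⟨r ^ k, by positivity⟩ : {ε : ℝ // 0 < ε}))
  obtain ⟨n, hn⟩ := lt_iSup_iff.1 h1
  obtain ⟨z, hz⟩ := lt_iSup_iff.1 hn
  exact ⟨n.1, n.2, z.1, agree_of_dist hr0 hr1 z.2.1, z.2.2, EReal.coe_lt_coe_iff.1 hz⟩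

theorem le_mane_of_exists {A : ℕ → ℕ → Bool} {r : ℝ} (hr0 : 0 < r) (hr1 : r < 1)
    {f : MarkovShift A → ℝ} {x y : MarkovShift A} {c : ℝ}
    (h : ∀ k : ℕ, ∃ n, 1 ≤ n ∧ ∃ z : MarkovShift A, (∀ i < k, z.1 i = x.1 i) ∧ shift^[n] z = y ∧
      c ≤ birkhoff (fun w => f w - mf f) n z) : (c : EReal) ≤ manePot r f x y := by
  refine le_iInf fun ε => ?_
  obtain ⟨k, hk⟩ := exists_pow_lt_of_lt_one ε.2 hr1
  obtain ⟨n, hn, z, hz, hs, hc⟩ := h k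
  refine le_trans (EReal.coe_le_coe_iff.2 hc) ?_
  exact le_iSup_of_le ⟨n, hn⟩ (le_iSup_of_le
    ⟨z, lt_of_le_of_lt (dist_of_agree hr0 hr1 hz) hk, hs⟩ le_rfl)

theorem birkhoff_sub {A : ℕ → ℕ → Bool} (f : MarkovShift A → ℝ) (m : ℝ) (n : ℕ)
    (z : MarkovShift A) : birkhoff (fun w => f w - m) n z = birkhoff f n z - n * m := by
  simp [birkhoff, Finset.sum_sub_distrib]

theorem birkhoff_add {A : ℕ → ℕ → Bool} (f : MarkovShift A → ℝ) (n m : ℕ)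
    (z : MarkovShift A) : birkhoff f (n + m) z = birkhoff f n z + birkhoff f m (shift^[n] z) := by
  simp only [birkhoff, Finset.sum_range_add, ← Function.iterate_add_apply]
  simp only [add_comm n]

theorem birkhoff_le_subaction {A : ℕ → ℕ → Bool} {f V : MarkovShift A → ℝ}
    (hV : ∀ x, f x + V x - V (shift x) - mf f ≤ 0) (n : ℕ) (z : MarkovShift A) :
    birkhoff (fun w => f w - mf f) n z ≤ V (shift^[n] z) - V z := by
  induction n with
  | zero => simp [birkhoff]
  | succ k ih =>
    have h := hV (shift^[k] z)
    unfold birkhoff at ih ⊢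
    rw [Finset.sum_range_succ, Function.iterate_succ_apply']
    linarith

theorem tendsto_of_agree {A : ℕ → ℕ → Bool} {x : MarkovShift A} {z : ℕ → MarkovShift A}
    (h : ∀ k, ∀ i < k, (z k).1 i = x.1 i) : Tendsto z atTop (𝓝 x) := by
  refine tendsto_subtype_rng.2 ?_
  refine tendsto_pi_nhds.2 fun i => ?_
  refine tendsto_nhds_of_eventually_eq ?_
  filter_upwards [eventually_gt_atTop i] with k hk using h k i hk

theorem walters_small {A : ℕ → ℕ → Bool} {f : MarkovShift A → ℝ} (h : SatisfiesWalters f)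
    {δ : ℝ} (hδ : 0 < δ) (k₀ : ℕ) : ∃ k, k₀ ≤ k ∧ 1 ≤ k ∧ ∀ n, 1 ≤ n → ∀ x y : MarkovShift A,
      (∀ i < n + k, x.1 i = y.1 i) → |birkhoff f n x - birkhoff f n y| < δ := by
  obtain ⟨k, hk1, hk2, hk3⟩ := ((h.2.eventually (gt_mem_nhds hδ)).and
    ((eventually_ge_atTop k₀).and (eventually_ge_atTop 1))).exists
  refine ⟨k, hk2, hk3, fun n hn x y hxy => lt_of_le_of_lt ?_ hk1⟩
  exact le_csSup (h.1 k hk3) ⟨n, hn, x, y, hxy, rfl⟩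

theorem exists_glue {A : ℕ → ℕ → Bool} (x y : MarkovShift A) (n : ℕ) (h : x.1 n = y.1 0) :
    ∃ w : MarkovShift A, (∀ i < n, w.1 i = x.1 i) ∧ shift^[n] w = y := by
  refine ⟨⟨fun i => if i < n then x.1 i else y.1 (i - n), fun i => ?_⟩, ?_, ?_⟩
  · rcases lt_trichotomy (i + 1) n with h1 | h1 | h1
    · simp only [h1, show i < n by omega, if_true]
      exact x.2 i
    · simp only [show i < n by omega, show ¬ (i + 1 < n) by omega, if_true, if_false]
      rw [show i + 1 - n = 0 by omega, ← h, ← h1]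
      exact x.2 i
    · simp only [show ¬ i < n by omega, show ¬ (i + 1 < n) by omega, if_false]
      rw [show i + 1 - n = (i - n) + 1 by omega]
      exact y.2 _
  · intro i hi
    simp [hi]
  · apply ext_iff'
    intro i
    refine (shift_iter_apply _ n i).trans ?_
    simp

theorem exists_periodic {A : ℕ → ℕ → Bool} (g : ℕ → ℕ) (n : ℕ) (hn : 1 ≤ n)
    (hg : ∀ i < n, A (g i) (g (i + 1)) = true) (h0 : g n = g 0) :
    ∃ w : MarkovShift A, (∀ i, w.1 i = g (i % n)) ∧ shift^[n] w = w := by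
  refine ⟨⟨fun i => g (i % n), fun i => ?_⟩, fun i => rfl, ?_⟩
  · have hlt : i % n < n := Nat.mod_lt _ hn
    have := hg _ hlt
    by_cases hc : i % n + 1 = n
    · have : (i + 1) % n = 0 := by
        rw [← Nat.mod_add_mod, hc, Nat.mod_self]
      show A (g (i % n)) (g ((i + 1) % n)) = true
      rw [this, ← h0]
      have h2 := hg _ hlt
      rwa [hc] at h2
    · have : (i + 1) % n = i % n + 1 := by
        rw [← Nat.mod_add_mod, Nat.mod_eq_of_lt (by omega)]
      show A (g (i % n)) (g ((i + 1) % n)) = true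
      rw [this]
      exact hg _ hlt
  · apply ext_iff'
    intro i
    refine (shift_iter_apply _ n i).trans ?_
    simp

theorem bounded_above {A : ℕ → ℕ → Bool} (hbip : FinitelyPrimitive A)
    (f : MarkovShift A → ℝ) (hVar1 : Var1Finite f) (p : ℝ) (hP : HasGurevichPressure f p)
    (x₀ : MarkovShift A) : ∃ C, ∀ x, f x ≤ C := by
  obtain ⟨M, hM⟩ := hVar1
  have hvar : ∀ x y : MarkovShift A, x.1 0 = y.1 0 → |f x - f y| ≤ M := by
    intro x y hxy
    refine hM ⟨x, y, ?_, by simp [birkhoff]⟩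
    intro i hi
    obtain rfl : i = 0 := by omega
    exact hxy
  obtain ⟨K, F, hF⟩ := hbip
  have hD : ∀ c : ℕ, ∃ D : ℝ, ∀ y : MarkovShift A, y.1 0 = c → -D ≤ f y := by
    intro c
    by_cases hc : ∃ y : MarkovShift A, y.1 0 = c
    · obtain ⟨q, hq⟩ := hc
      refine ⟨M - f q, fun y hy => ?_⟩
      have := (abs_le.1 (hvar y q (hy.trans hq.symm))).1
      linarith
    · exact ⟨0, fun y hy => absurd ⟨y, hy⟩ hc⟩
  choose D hD using hD
  set a := x₀.1 0 with ha
  have haA : Admissible A a := ⟨x₀, rfl⟩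
  set D' : ℝ := ∑ c ∈ insert a F, |D c| with hD'
  have hlow : ∀ y : MarkovShift A, y.1 0 ∈ insert a F → -D' ≤ f y := by
    intro y hy
    have h1 := hD _ y rfl
    have h2 : |D (y.1 0)| ≤ D' := Finset.single_le_sum (f := fun c => |D c|)
      (fun _ _ => abs_nonneg _) hy
    have := le_abs_self (D (y.1 0))
    linarith
  set n := 2 * K + 2 with hn
  have hsum := (hP a haA).1 n (by omega)
  refine ⟨partitionSum f n a + n * D' - D' + M, fun x => ?_⟩
  set b := x.1 0 with hb
  obtain ⟨w₁, hl₁, hm₁, hc₁⟩ := hF a b haA ⟨x, rfl⟩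
  obtain ⟨w₂, hl₂, hm₂, hc₂⟩ := hF b a ⟨x, rfl⟩ haA
  -- the periodic word
  set g : ℕ → ℕ := fun i => if i ≤ K then (a :: (w₁ ++ [b])).getD i 0
    else (b :: (w₂ ++ [a])).getD (i - (K + 1)) 0 with hgdef
  have hchain : ∀ (L : List ℕ), List.IsChain (fun u v => A u v = true) L → ∀ i, i + 1 < L.length →
      A (L.getD i 0) (L.getD (i + 1) 0) = true := by
    intro L hL i hi
    have := List.isChain_iff_getElem.1 hL i hi
    rw [List.getD_eq_getElem _ _ hi, List.getD_eq_getElem _ _ (by omega)]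
    exact this
  have hmid : (a :: (w₁ ++ [b])).getD (K + 1) 0 = b := by
    simp [← hl₁]
  have hend : (b :: (w₂ ++ [a])).getD (K + 1) 0 = a := by
    simp [← hl₂]
  have hgA : ∀ i < n, A (g i) (g (i + 1)) = true := by
    intro i hi
    rcases lt_trichotomy i K with h | h | h
    · simp only [hgdef, show i ≤ K by omega, show i + 1 ≤ K by omega, if_true]
      exact hchain _ hc₁ i (by simp [hl₁]; omega)
    · simp only [hgdef, show i ≤ K by omega, show ¬ (i + 1 ≤ K) by omega, if_true, if_false]
      have := hchain _ hc₁ i (by simp [hl₁]; omega)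
      rw [h, hmid] at this
      rw [h]
      simpa using this
    · simp only [hgdef, show ¬ (i ≤ K) by omega, show ¬ (i + 1 ≤ K) by omega, if_false]
      have := hchain _ hc₂ (i - (K + 1)) (by simp [hl₂]; omega)
      rwa [show i - (K + 1) + 1 = i + 1 - (K + 1) by omega] at this
  have hg0 : g 0 = a := by simp [hgdef]
  have hgn : g n = a := by
    simp only [hgdef, show ¬ (n ≤ K) by omega, if_false]
    rw [show n - (K + 1) = K + 1 by omega]
    exact hend
  have hgb : g (K + 1) = b := by simp [hgdef]
  have hgF : ∀ i < n, i ≠ K + 1 → g i ∈ insert a F := by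
    intro i hi hne
    rcases Nat.eq_zero_or_pos i with h | h
    · rw [h, hg0]; simp
    apply Finset.mem_insert_of_mem
    by_cases h1 : i ≤ K
    · simp only [hgdef, h1, if_true]
      obtain ⟨j, rfl⟩ : ∃ j, i = j + 1 := ⟨i - 1, by omega⟩
      rw [List.getD_cons_succ, List.getD_append _ _ _ _ (by omega),
        List.getD_eq_getElem _ _ (by omega)]
      exact hm₁ _ (List.getElem_mem _)
    · simp only [hgdef, h1, if_false]
      obtain ⟨j, rfl⟩ : ∃ j, i = j + 1 + (K + 1) := ⟨i - 1 - (K + 1), by omega⟩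
      rw [Nat.add_sub_cancel, List.getD_cons_succ, List.getD_append _ _ _ _ (by omega),
        List.getD_eq_getElem _ _ (by omega)]
      exact hm₂ _ (List.getElem_mem _)
  obtain ⟨w, hw, hper⟩ := exists_periodic g n (by omega) hgA (hgn.trans hg0.symm)
  have hw' : ∀ i < n, (shift^[i] w).1 0 = g i := by
    intro i hi
    rw [shift_iter_apply, hw, add_zero, Nat.mod_eq_of_lt hi]
  have h1 : Real.exp (birkhoff f n w) ≤ partitionSum f n a :=
    hsum.le_tsum (⟨w, hper, by rw [hw, Nat.zero_mod, hg0]⟩ :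
      {x : MarkovShift A // shift^[n] x = x ∧ x.1 0 = a}) (fun _ _ => (Real.exp_pos _).le)
  have h2 := Real.add_one_le_exp (birkhoff f n w)
  have h3 : ∑ j ∈ Finset.range n, (-D' + if j = K + 1 then f (shift^[K + 1] w) + D' else 0)
      ≤ birkhoff f n w := by
    apply Finset.sum_le_sum
    intro j hj
    have hj' := Finset.mem_range.1 hj
    split_ifs with h
    · rw [h]; linarith
    · have := hlow (shift^[j] w) (by rw [hw' j hj']; exact hgF j hj' h)
      linarith
  rw [Finset.sum_add_distrib, Finset.sum_ite_eq', if_pos (Finset.mem_range.2 (by omega)),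
    Finset.sum_const, Finset.card_range, nsmul_eq_mul] at h3
  have h4 := (abs_le.1 (hvar x (shift^[K + 1] w) (by rw [hw' _ (by omega), hgb]))).2
  linarith

theorem continuous_shift {A : ℕ → ℕ → Bool} : Continuous (shift : MarkovShift A → MarkovShift A) := by
  refine Continuous.subtype_mk ?_ _
  exact continuous_pi fun i => (continuous_apply (i + 1)).comp continuous_subtype_val

instance instT1' {A : ℕ → ℕ → Bool} : T1Space (MarkovShift A) :=
  inferInstanceAs (T1Space {x : ℕ → ℕ // ∀ i, A (x i) (x (i + 1)) = true})

theorem periodic_le {A : ℕ → ℕ → Bool} (f : MarkovShift A → ℝ) (C : ℝ) (hC : ∀ x, f x ≤ C)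
    (n : ℕ) (hn : 1 ≤ n) (w : MarkovShift A) (hw : shift^[n] w = w) :
    birkhoff f n w ≤ n * mf f := by
  have hn0 : (n : ℝ) ≠ 0 := by positivity
  set μ₀ : Measure (MarkovShift A) := ∑ j ∈ Finset.range n, Measure.dirac (shift^[j] w) with hμ₀
  set μ : Measure (MarkovShift A) := (n : ℝ≥0∞)⁻¹ • μ₀ with hμ
  have hprob : IsProbabilityMeasure μ := by
    constructor
    rw [hμ, hμ₀]
    simp only [Measure.smul_apply, Measure.finsetSum_apply, measure_univ, Finset.sum_const,
      Finset.card_range, nsmul_eq_mul, mul_one, smul_eq_mul]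
    exact ENNReal.inv_mul_cancel (by simp; omega) (by simp)
  have hmeas : Measurable (shift : MarkovShift A → MarkovShift A) := continuous_shift.measurable
  have hinv₀ : μ₀.map shift = μ₀ := by
    rw [hμ₀, ← Measure.mapₗ_apply_of_measurable hmeas, map_sum]
    simp only [Measure.mapₗ_apply_of_measurable hmeas, Measure.map_dirac' hmeas]
    simp only [← Function.iterate_succ_apply']
    obtain ⟨m, rfl⟩ : ∃ m, n = m + 1 := ⟨n - 1, by omega⟩
    rw [Finset.sum_range_succ, Finset.sum_range_succ' (fun j => Measure.dirac (shift^[j] w)), hw]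
    simp
  have hint₀ : Integrable f μ₀ := by
    rw [hμ₀, integrable_finsetSum_measure]
    intro i _
    exact integrable_dirac (by simp)
  have hval : ∫ x, f x ∂μ = (n : ℝ)⁻¹ * birkhoff f n w := by
    rw [hμ, integral_smul_measure, hμ₀, integral_finsetSum_measure]
    · simp [birkhoff, integral_dirac]
    · intro i _
      exact integrable_dirac (by simp)
  have hle : (n : ℝ)⁻¹ * birkhoff f n w ≤ mf f := by
    apply le_csSup
    · refine ⟨C, ?_⟩
      rintro c ⟨ν, hν, hi, rfl⟩
      have := hν.1
      calc ∫ x, f x ∂ν ≤ ∫ _, C ∂ν := integral_mono hi (integrable_const _) hC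
        _ = C := by simp
    · refine ⟨μ, ⟨hprob, ?_⟩, ?_, hval⟩
      · rw [hμ, Measure.map_smul, hinv₀]
      · exact hint₀.smul_measure (by simp; omega)
  have hpos : (0 : ℝ) < n := by positivity
  rwa [inv_mul_le_iff₀ hpos] at hle

/-- Properties of the Mañé potential: comparison with calibrated sub-actions,
`S_f(x,x) ≤ 0`, and the triangle inequality. -/
theorem mane_potential_properties
    (A : ℕ → ℕ → Bool) (r : ℝ) (hr0 : 0 < r) (hr1 : r < 1)
    (hmix : TopologicallyMixing A)
    (hbip : FinitelyPrimitive A)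
    (f : MarkovShift A → ℝ)
    (hWalters : SatisfiesWalters f)
    (hVar1 : Var1Finite f)
    (p : ℝ)
    (hPfin : HasGurevichPressure f p) :
    (∀ V : MarkovShift A → ℝ, IsCalibratedSubaction f V →
        ∀ x y : MarkovShift A, manePot r f x y ≤ ((V y - V x : ℝ) : EReal)) ∧
      (∀ x : MarkovShift A, manePot r f x x ≤ 0) ∧
      (∀ x y z : MarkovShift A,
        manePot r f x y + manePot r f y z ≤ manePot r f x z) := by
  refine ⟨?_, ?_, ?_⟩
  · intro V hV x y
    by_contra hlt
    obtain ⟨c, hc1, hc2⟩ := EReal.lt_iff_exists_real_btwn.1 (not_le.1 hlt)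
    choose n hn z hz hs hb using exists_of_lt_mane hr0 hr1 hc2
    have hlim : Tendsto (fun k => V y - V (z k)) atTop (𝓝 (V y - V x)) :=
      tendsto_const_nhds.sub ((hV.1.tendsto x).comp (tendsto_of_agree hz))
    have hge : c ≤ V y - V x := by
      refine ge_of_tendsto' hlim fun k => ?_
      have := birkhoff_le_subaction hV.2.2.1 (n k) (z k)
      rw [hs k] at this
      linarith [hb k]
    exact absurd (EReal.coe_lt_coe_iff.1 hc1) (not_lt.2 hge)
  · intro x
    obtain ⟨C, hC⟩ := bounded_above hbip f hVar1 p hPfin x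
    by_contra hlt
    obtain ⟨c, hc1, hc2⟩ := EReal.lt_iff_exists_real_btwn.1 (not_le.1 hlt)
    have hc0 : 0 < c := by exact_mod_cast hc1
    obtain ⟨k, -, hk1, hk⟩ := walters_small hWalters hc0 0
    obtain ⟨n, hn, z, hz, hs, hb⟩ := exists_of_lt_mane hr0 hr1 hc2 k
    have hzx : ∀ i, z.1 (n + i) = x.1 i := fun i => by rw [← shift_iter_apply, hs]
    obtain ⟨w, hw, hper⟩ := exists_periodic z.1 n hn (fun i _ => z.2 i)
      (by rw [hz 0 (by omega), ← hzx 0, add_zero])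
    have hwz : ∀ i, i < n + k → z.1 i = w.1 i := by
      intro i
      induction i using Nat.strong_induction_on with
      | _ i ih =>
        intro hi
        by_cases hin : i < n
        · rw [hw, Nat.mod_eq_of_lt hin]
        · obtain ⟨j, rfl⟩ : ∃ j, i = n + j := ⟨i - n, by omega⟩
          rw [hzx, ← hz j (by omega), ih j (by omega) (by omega), hw, hw, Nat.add_mod_left]
    have h1 := (abs_lt.1 (hk n hn z w hwz)).2
    have h2 := periodic_le f C hC n hn w hper
    rw [birkhoff_sub] at hb
    linarith
  · intro x y z
    refine EReal.add_le_of_forall_lt fun a ha b hb => ?_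
    induction a using EReal.rec with
    | bot => simp
    | top => exact absurd ha not_top_lt
    | coe a =>
    induction b using EReal.rec with
    | bot => simp
    | top => exact absurd hb not_top_lt
    | coe b =>
    rw [← EReal.coe_add]
    refine EReal.ge_of_forall_gt_iff_ge.1 fun c hc => ?_
    have hc' : 0 < a + b - c := by
      have := EReal.coe_lt_coe_iff.1 hc
      linarith
    refine le_mane_of_exists hr0 hr1 fun k₀ => ?_
    obtain ⟨k, hk0, hk1, hk⟩ := walters_small hWalters hc' k₀
    obtain ⟨n, hn, z₁, hz₁, hs₁, hb₁⟩ := exists_of_lt_mane hr0 hr1 ha k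
    obtain ⟨m, hm, z₂, hz₂, hs₂, hb₂⟩ := exists_of_lt_mane hr0 hr1 hb k
    have hy : ∀ i, z₁.1 (n + i) = y.1 i := fun i => by rw [← shift_iter_apply, hs₁]
    obtain ⟨w, hw1, hw2⟩ := exists_glue z₁ z₂ n (by rw [hz₂ 0 (by omega), ← hy 0, add_zero])
    have hagree : ∀ i < n + k, z₁.1 i = w.1 i := by
      intro i hi
      by_cases hin : i < n
      · exact (hw1 i hin).symm
      · obtain ⟨j, rfl⟩ : ∃ j, i = n + j := ⟨i - n, by omega⟩
        rw [hy, ← shift_iter_apply, hw2, hz₂ j (by omega)]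
    refine ⟨m + n, by omega, w, ?_, ?_, ?_⟩
    · intro i hi
      rw [← hagree i (by omega), hz₁ i (by omega)]
    · rw [Function.iterate_add_apply, hw2, hs₂]
    · have h1 := (abs_lt.1 (hk n hn z₁ w hagree)).2
      rw [add_comm m n, birkhoff_add, hw2]
      rw [birkhoff_sub] at hb₁ ⊢
      linarith

end MarkovShift
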